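/- arXiv:2505.06051 — 2 statements merged into one kernel-verified Lean document; each statement's English description precedes it below -/
import Mathlib

section
/- Let (τ_L)_{L≥2} be nonnegative reals with τ_L → 0, and for each L let X and Y_L be independent centred real Gaussian random variables of variance 1 and τ_L², respectively; let a_L > 0 be defined by P(X > a_L) = L^{−d}. Then for every s ∈ ℝ, L^d · P(X + Y_L ≥ a_L√(1+τ_L²) + s/a_L) → e^{−s} as L → ∞. -/
/-!
Let `φ` be the density of a Gaussian of mean `μ` and variance `v`. Moving from a high level `x` to
`x + v / (x - μ) * u` multiplies `φ` by `exp (-u)`, up to a factor tending to `1` as `x → ∞`.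
Integrating over `u > 0` gives Mills' asymptotics `v * φ x / (x - μ)` for the tail, and hence the
tail too is multiplied by `exp (-u)` in the limit. If `Y` has variance `v`, then `X + Y` has the law
of `√(1 + v) * X`, so `a * √(1 + v) + s / a ≤ X + Y` is as likely as `a + (s / √(1 + v)) / a < X`,
and the factor in question is `exp (-s / √(1 + v))`.
-/

open MeasureTheory ProbabilityTheory Filter
open scoped ENNReal NNReal

noncomputable section

open Asymptotics Set
open scoped Topology

lemma tendsto_atTop_of_tendsto_measure_Ioi {α ι : Type*} [LinearOrder α] [NoMaxOrder α]
    [TopologicalSpace α] [ClosedIicTopology α] [MeasurableSpace α] (μ : Measure α)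
    [μ.IsOpenPosMeasure] {l : Filter ι} {a : ι → α}
    (h : Tendsto (fun i => μ (Ioi (a i))) l (𝓝 0)) : Tendsto a l atTop := by
  refine tendsto_atTop.mpr fun M => ?_
  have hM : 0 < μ (Ioi M) := isOpen_Ioi.measure_pos μ nonempty_Ioi
  filter_upwards [h.eventually_lt_const hM] with i hi
  contrapose! hi
  exact measure_mono (Ioi_subset_Ioi hi.le)

lemma ofReal_one_div_natCast_pow {n : ℕ} (hn : n ≠ 0) (d : ℕ) :
    ENNReal.ofReal (1 / (n : ℝ) ^ d) = ((n : ℝ≥0∞) ^ d)⁻¹ := by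
  rw [one_div, ENNReal.ofReal_inv_of_pos (by positivity), ENNReal.ofReal_pow n.cast_nonneg,
    ENNReal.ofReal_natCast]

lemma tendsto_natCast_pow_nhds_top {d : ℕ} (hd : d ≠ 0) :
    Tendsto (fun n : ℕ => (n : ℝ≥0∞) ^ d) atTop (𝓝 ∞) := by
  simpa [hd] using ENNReal.Tendsto.pow (n := d) ENNReal.tendsto_nat_nhds_top

lemma isOpenPosMeasure_gaussianReal (μ : ℝ) {v : ℝ≥0} (hv : v ≠ 0) :
    (gaussianReal μ v).IsOpenPosMeasure :=
  (gaussianReal_absolutelyContinuous' μ hv).isOpenPosMeasure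

section Tail

variable {μ : ℝ} {v : ℝ≥0} {ι : Type*} {l : Filter ι}

lemma integral_comp_const_add_mul_Ioi {E : Type*} [NormedAddCommGroup E] [NormedSpace ℝ E]
    (f : ℝ → E) (x a : ℝ) {c : ℝ} (hc : 0 < c) :
    c • ∫ t in Ioi a, f (x + c * t) = ∫ y in Ioi (x + c * a), f y := by
  have htranslate := (measurePreserving_add_left (volume : Measure ℝ) x).setIntegral_preimage_emb
    (measurableEmbedding_addLeft x) f (Ioi (x + c * a))
  rw [integral_comp_mul_left_Ioi' (fun y => f (x + y)) a hc, ← htranslate,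
    preimage_const_add_Ioi, add_sub_cancel_left]

lemma gaussianPDFReal_add_div_mul (hv : v ≠ 0) {x : ℝ} (hx : x ≠ μ) (u : ℝ) :
    gaussianPDFReal μ v (x + v / (x - μ) * u) =
      gaussianPDFReal μ v x * Real.exp (-u - v / (2 * (x - μ) ^ 2) * u ^ 2) := by
  have hxμ : x - μ ≠ 0 := sub_ne_zero.mpr hx
  rw [gaussianPDFReal, gaussianPDFReal, mul_assoc _ (Real.exp _), ← Real.exp_add]
  congr 2
  field_simp
  ring

lemma gaussianReal_real_Ioi (hv : v ≠ 0) {x : ℝ} (hx : μ < x) :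
    (gaussianReal μ v).real (Ioi x) =
      v * gaussianPDFReal μ v x / (x - μ) *
        ∫ t in Ioi 0, Real.exp (-t - v / (2 * (x - μ) ^ 2) * t ^ 2) := by
  have hscale : 0 < v / (x - μ) := div_pos (NNReal.coe_pos.mpr hv.bot_lt) (sub_pos.mpr hx)
  calc (gaussianReal μ v).real (Ioi x)
      = ∫ y in Ioi x, gaussianPDFReal μ v y := by
        rw [measureReal_def, gaussianReal_apply_eq_integral μ hv, ENNReal.toReal_ofReal]
        exact integral_nonneg fun y => gaussianPDFReal_nonneg μ v y
    _ = v / (x - μ) * ∫ t in Ioi 0, gaussianPDFReal μ v (x + v / (x - μ) * t) := by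
        simpa using (integral_comp_const_add_mul_Ioi (gaussianPDFReal μ v) x 0 hscale).symm
    _ = _ := by
        simp_rw [gaussianPDFReal_add_div_mul hv hx.ne', integral_const_mul]
        ring

lemma tendsto_integral_Ioi_exp_neg_sub_mul_sq :
    Tendsto (fun δ : ℝ => ∫ t in Ioi 0, Real.exp (-t - δ * t ^ 2)) (𝓝[≥] 0) (𝓝 1) := by
  rw [← integral_exp_neg_Ioi_zero]
  refine tendsto_integral_filter_of_dominated_convergence (fun t => Real.exp (-t))
    (.of_forall fun δ => by fun_prop) ?_ (integrableOn_exp_neg_Ioi 0) (.of_forall fun t => ?_)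
  · filter_upwards [self_mem_nhdsWithin] with δ (hδ : 0 ≤ δ)
    refine .of_forall fun t => ?_
    rw [Real.norm_of_nonneg (Real.exp_pos _).le, Real.exp_le_exp]
    exact sub_le_self _ (by positivity)
  · have hcont : Continuous fun δ : ℝ => Real.exp (-t - δ * t ^ 2) := by fun_prop
    simpa using (hcont.tendsto 0).mono_left nhdsWithin_le_nhds

lemma tendsto_const_div_two_mul_sub_sq (μ c : ℝ) :
    Tendsto (fun x : ℝ => c / (2 * (x - μ) ^ 2)) atTop (𝓝 0) :=
  tendsto_const_nhds.div_atTop <| ((tendsto_pow_atTop two_ne_zero).comp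
    (tendsto_atTop_add_const_right _ (-μ) tendsto_id)).const_mul_atTop two_pos

theorem isEquivalent_gaussianReal_real_Ioi (μ : ℝ) (hv : v ≠ 0) :
    (fun x => (gaussianReal μ v).real (Ioi x)) ~[atTop]
      fun x => v * gaussianPDFReal μ v x / (x - μ) := by
  have hδ : Tendsto (fun x : ℝ => v / (2 * (x - μ) ^ 2)) atTop (𝓝[≥] 0) :=
    tendsto_nhdsWithin_iff.mpr
      ⟨tendsto_const_div_two_mul_sub_sq μ v, .of_forall fun x => mem_Ici.mpr (by positivity)⟩
  refine isEquivalent_of_tendsto_one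
    ((tendsto_integral_Ioi_exp_neg_sub_mul_sq.comp hδ).congr' ?_)
  filter_upwards [eventually_gt_atTop μ] with x hx
  have hpos : 0 < v * gaussianPDFReal μ v x / (x - μ) :=
    div_pos (mul_pos (NNReal.coe_pos.mpr hv.bot_lt) (gaussianPDFReal_pos μ v x hv))
      (sub_pos.mpr hx)
  rw [Pi.div_apply, gaussianReal_real_Ioi hv hx, mul_div_cancel_left₀ _ hpos.ne',
    Function.comp_apply]

lemma tendsto_gaussianPDFReal_div (μ : ℝ) (hv : v ≠ 0) {x u : ι → ℝ} {s : ℝ}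
    (hx : Tendsto x l atTop) (hu : Tendsto u l (𝓝 s)) :
    Tendsto (fun i => gaussianPDFReal μ v (x i + v / (x i - μ) * u i) / gaussianPDFReal μ v (x i))
      l (𝓝 (Real.exp (-s))) := by
  have hexponent : Tendsto (fun i => -u i - v / (2 * (x i - μ) ^ 2) * u i ^ 2) l (𝓝 (-s)) := by
    simpa using hu.neg.sub (((tendsto_const_div_two_mul_sub_sq μ v).comp hx).mul (hu.pow 2))
  refine ((Real.continuous_exp.tendsto _).comp hexponent).congr' ?_
  filter_upwards [hx.eventually_ne_atTop μ] with i hi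
  rw [gaussianPDFReal_add_div_mul hv hi,
    mul_div_cancel_left₀ _ (gaussianPDFReal_pos μ v _ hv).ne', Function.comp_apply]

lemma tendsto_gaussianReal_real_Ioi_div (μ : ℝ) (hv : v ≠ 0) {x u : ι → ℝ} {s : ℝ}
    (hx : Tendsto x l atTop) (hu : Tendsto u l (𝓝 s)) :
    Tendsto (fun i => (gaussianReal μ v).real (Ioi (x i + v / (x i - μ) * u i)) /
      (gaussianReal μ v).real (Ioi (x i))) l (𝓝 (Real.exp (-s))) := by
  set y := fun i => x i + v / (x i - μ) * u i
  have hx_sub : Tendsto (fun i => x i - μ) l atTop := tendsto_atTop_add_const_right _ (-μ) hx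
  have hshift : Tendsto (fun i => v / (x i - μ) * u i) l (𝓝 0) := by
    simpa using (hx_sub.const_div_atTop (v : ℝ)).mul hu
  have hy : Tendsto y l atTop := hx.atTop_add hshift
  have hdistance : Tendsto (fun i => (y i - μ) / (x i - μ)) l (𝓝 1) := by
    have h := (hshift.div_atTop hx_sub).const_add 1
    rw [add_zero] at h
    refine h.congr' ?_
    filter_upwards [hx_sub.eventually_ne_atTop 0] with i hi
    rw [← div_self hi, ← add_div, sub_add_eq_add_sub]
  have hmills := isEquivalent_gaussianReal_real_Ioi μ hv
  refine ((hmills.comp_tendsto hy).div (hmills.comp_tendsto hx)).tendsto_nhds_iff.mpr ?_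
  have h := (tendsto_gaussianPDFReal_div μ hv hx hu).div hdistance one_ne_zero
  rw [div_one] at h
  refine h.congr fun i => ?_
  simp only [Function.comp_apply, Pi.div_apply]
  rw [div_div_div_comm (v * gaussianPDFReal μ v (y i)),
    mul_div_mul_left _ _ (NNReal.coe_ne_zero.mpr hv)]

theorem tendsto_gaussianReal_Ioi_div (μ : ℝ) (hv : v ≠ 0) {x u : ι → ℝ} {s : ℝ}
    (hx : Tendsto x l atTop) (hu : Tendsto u l (𝓝 s)) :
    Tendsto (fun i => gaussianReal μ v (Ioi (x i + v / (x i - μ) * u i)) /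
      gaussianReal μ v (Ioi (x i))) l (𝓝 (ENNReal.ofReal (Real.exp (-s)))) := by
  have := isOpenPosMeasure_gaussianReal μ hv
  refine (ENNReal.tendsto_ofReal (tendsto_gaussianReal_real_Ioi_div μ hv hx hu)).congr fun i => ?_
  have hpos : 0 < (gaussianReal μ v).real (Ioi (x i)) :=
    ENNReal.toReal_pos (isOpen_Ioi.measure_ne_zero _ nonempty_Ioi) (measure_ne_top _ _)
  rw [ENNReal.ofReal_div_of_pos hpos, ofReal_measureReal, ofReal_measureReal]

end Tail

lemma gaussianReal_prod_setOf_le_add (m₁ m₂ : ℝ) (v₁ v₂ : ℝ≥0) (c : ℝ) :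
    ((gaussianReal m₁ v₁).prod (gaussianReal m₂ v₂)) {p : ℝ × ℝ | c ≤ p.1 + p.2} =
      gaussianReal (m₁ + m₂) (v₁ + v₂) (Ici c) := by
  rw [← gaussianReal_conv_gaussianReal, Measure.conv,
    Measure.map_apply measurable_add measurableSet_Ici]
  rfl

lemma gaussianReal_map_sub_div_sqrt (μ : ℝ) {v : ℝ≥0} (hv : v ≠ 0) :
    (gaussianReal μ v).map (fun x => (x - μ) / √v) = gaussianReal 0 1 := by
  have hmap := Measure.map_map (μ := gaussianReal μ v) (g := (· / √(v : ℝ))) (f := (· - μ))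
    (by fun_prop) (by fun_prop)
  rw [Function.comp_def] at hmap
  rw [← hmap, gaussianReal_map_sub_const, gaussianReal_map_div_const, sub_self, zero_div]
  congr 1
  ext
  simp [hv]

lemma gaussianReal_Ici_eq_gaussianReal_Ioi (μ : ℝ) {v : ℝ≥0} (hv : v ≠ 0) (c : ℝ) :
    gaussianReal μ v (Ici c) = gaussianReal 0 1 (Ioi ((c - μ) / √v)) := by
  have hσ : 0 < √(v : ℝ) := Real.sqrt_pos.mpr (NNReal.coe_pos.mpr hv.bot_lt)
  have hpreimage : (fun x => (x - μ) / √v) ⁻¹' Ici ((c - μ) / √v) = Ici c := by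
    ext x
    simp only [mem_preimage, mem_Ici, div_le_div_iff_of_pos_right hσ, sub_le_sub_iff_right]
  have := nullSingletonClass_gaussianReal (μ := 0) (one_ne_zero (α := ℝ≥0))
  rw [measure_congr Ioi_ae_eq_Ici, ← gaussianReal_map_sub_div_sqrt μ hv,
    Measure.map_apply (by fun_prop) measurableSet_Ici, hpreimage]

lemma gaussianReal_prod_setOf_mul_sqrt_add_div_le_add (v : ℝ≥0) (a s : ℝ) :
    ((gaussianReal 0 1).prod (gaussianReal 0 v)) {p : ℝ × ℝ | a * √(1 + v) + s / a ≤ p.1 + p.2} =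
      gaussianReal 0 1 (Ioi (a + s / √(1 + v) / a)) := by
  have hσ : √(1 + (v : ℝ)) ≠ 0 := by positivity
  rw [gaussianReal_prod_setOf_le_add, gaussianReal_Ici_eq_gaussianReal_Ioi _ (by positivity),
    add_zero, sub_zero, NNReal.coe_add, NNReal.coe_one, add_div,
    mul_div_cancel_right₀ _ hσ, div_right_comm]

theorem gaussian_sum_tail_general {ι : Type*} {l : Filter ι} {N : ι → ℝ≥0∞} {a : ι → ℝ}
    {v : ι → ℝ≥0} {w : ℝ≥0} (hN : Tendsto N l (𝓝 ∞))
    (ha : ∀ᶠ i in l, gaussianReal 0 1 (Ioi (a i)) = (N i)⁻¹) (hv : Tendsto v l (𝓝 w)) (s : ℝ) :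
    Tendsto
      (fun i => N i * ((gaussianReal 0 1).prod (gaussianReal 0 (v i)))
        {p : ℝ × ℝ | a i * √(1 + v i) + s / a i ≤ p.1 + p.2})
      l (𝓝 (ENNReal.ofReal (Real.exp (-(s / √(1 + w)))))) := by
  have := isOpenPosMeasure_gaussianReal 0 one_ne_zero
  have ha_atTop : Tendsto a l atTop := by
    refine tendsto_atTop_of_tendsto_measure_Ioi (gaussianReal 0 1) ?_
    simpa using (tendsto_inv_iff.mpr hN).congr' (ha.mono fun i hi => hi.symm)
  have hu : Tendsto (fun i => s / √(1 + v i)) l (𝓝 (s / √(1 + w))) := by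
    have hw : √(1 + (w : ℝ)) ≠ 0 := by positivity
    exact tendsto_const_nhds.div ((NNReal.tendsto_coe.mpr hv).const_add 1).sqrt hw
  refine (tendsto_gaussianReal_Ioi_div 0 one_ne_zero ha_atTop hu).congr' ?_
  filter_upwards [ha] with i hi
  rw [gaussianReal_prod_setOf_mul_sqrt_add_div_le_add, hi, div_eq_mul_inv, inv_inv, mul_comm,
    sub_zero, NNReal.coe_one, one_div_mul_eq_div]

/-- Lemma 2.3, first part.
Let `X, Y_L` be independent centred Gaussians of variance `1` and `τ_L²` with `τ_L → 0`,
and let `a_L > 0` be defined through `P(X > a_L) = L^{−d}`. Then for every `s ∈ ℝ`,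
`L^d · P(X + Y_L ≥ a_L√(1+τ_L²) + s/a_L) → e^{−s}` as `L → ∞`.
(The pair `(X, Y_L)` is realised as the two coordinates under the product measure
`N(0,1) ⊗ N(0,τ_L²)` on `ℝ × ℝ`.) -/
theorem gaussian_sum_tail
    (d : ℕ) (hd : 1 ≤ d)
    (τ : ℕ → ℝ) (hτ_nonneg : ∀ L, 0 ≤ τ L)
    (hτ : Tendsto τ atTop (nhds 0))
    (a : ℕ → ℝ) (ha_pos : ∀ L : ℕ, 2 ≤ L → 0 < a L)
    (ha_def : ∀ L : ℕ, 2 ≤ L →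
      gaussianReal 0 1 (Set.Ioi (a L)) = ENNReal.ofReal (1 / (L : ℝ) ^ d))
    (s : ℝ) :
    Tendsto
      (fun L : ℕ =>
        (L : ℝ≥0∞) ^ d *
          ((gaussianReal 0 1).prod (gaussianReal 0 (Real.toNNReal (τ L ^ 2))))
            {p : ℝ × ℝ | a L * Real.sqrt (1 + τ L ^ 2) + s / a L ≤ p.1 + p.2})
      atTop (nhds (ENNReal.ofReal (Real.exp (-s)))) := by
  have ha : ∀ᶠ L : ℕ in atTop, gaussianReal 0 1 (Ioi (a L)) = ((L : ℝ≥0∞) ^ d)⁻¹ := by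
    filter_upwards [eventually_ge_atTop 2] with L hL
    rw [ha_def L hL, ofReal_one_div_natCast_pow (by omega)]
  have hv : Tendsto (fun L => Real.toNNReal (τ L ^ 2)) atTop (𝓝 0) := by
    simpa using tendsto_real_toNNReal (hτ.pow 2)
  simpa [sq_nonneg] using
    gaussian_sum_tail_general (tendsto_natCast_pow_nhds_top (by omega)) ha hv s

end
end

section
/- Let (τ_L)_{L≥2} be nonnegative reals with τ_L → 0, X and Y_L independent centred Gaussians of variance 1 and τ_L², and a_L > 0 defined by P(X > a_L) = L^{−d}. For C, L > 0 set I_L(C) := [a_L/√(1+τ_L²) − C·max(1/a_L, τ_L), a_L/√(1+τ_L²) + C·max(1/a_L, τ_L)]. Then for every s ∈ ℝ: (i) limsup_{C→∞} limsup_{L→∞} L^d · P(X + Y_L ≥ a_L√(1+τ_L²) + s/a_L and X ∉ I_L(C)) = 0; (ii) consequently, for any sequence (θ_L) of positive reals with max(a_L τ_L², 1/a_L)/θ_L → 0, one has L^d · P(X + Y_L ≥ a_L√(1+τ_L²) + s/a_L and |X − a_L| > θ_L) → 0 as L → ∞. -/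
/-!
Write `Y = t V` with `V` standard Gaussian and `r = √(1 + t²)`. Rotating `(X, V)` by `arctan t`
turns `(X, X + Y)` into `((Z - t W) / r, r Z)` with `Z, W` independent standard Gaussians. The
event `X + Y ≥ a r + s / a` then constrains `Z` alone, forcing `Z ≥ a - |s| / a`, an event of
probability at most a constant multiple of `P(Z > a)`. Since `X - a / r = (Z - a) / r - t W / r`,
a deviation of `X` from `a / r` by more than `C max(1/a, t)` forces either `Z > a + C / (2 a)`,
which costs a factor `exp(-C / 2)`, or `|W| > C / 2`, which is independent of `Z`. Both factors
vanish as `C → ∞`, uniformly in `a` and `t`. For the window of radius `θ` around `a`, note that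
`|a / r - a| ≤ a t²` and that `t` lies below `max(a t², 1/a)`, because it is the geometric mean of
`a t²` and `1 / a`.
-/

open MeasureTheory ProbabilityTheory Filter
open scoped ENNReal NNReal

noncomputable section

/-- The interval `I_L(C)` of Lemma 2.3. -/
def gaussiantailInterval (τ : ℕ → ℝ) (a : ℕ → ℝ) (C : ℝ) (L : ℕ) : Set ℝ :=
  Set.Icc (a L / Real.sqrt (1 + τ L ^ 2) - C * max (1 / a L) (τ L))
    (a L / Real.sqrt (1 + τ L ^ 2) + C * max (1 / a L) (τ L))

lemma notMem_gaussiantailInterval_iff {τ a : ℕ → ℝ} {C : ℝ} {L : ℕ} {x : ℝ} :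
    x ∉ gaussiantailInterval τ a C L ↔
      C * max (1 / a L) (τ L) < |x - a L / √(1 + τ L ^ 2)| := by
  rw [gaussiantailInterval, ← Real.closedBall_eq_Icc, Metric.mem_closedBall, Real.dist_eq, not_le]

lemma gaussianReal_le_exp_mul_gaussianReal {m₁ m₂ c : ℝ} {v : ℝ≥0} (hv : v ≠ 0) {A : Set ℝ}
    (hA : ∀ x ∈ A, (x - m₂) ^ 2 / (2 * v) - (x - m₁) ^ 2 / (2 * v) ≤ c) :
    gaussianReal m₁ v A ≤ ENNReal.ofReal (Real.exp c) * gaussianReal m₂ v A := by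
  rw [gaussianReal_apply _ hv, gaussianReal_apply _ hv,
    ← lintegral_const_mul _ (measurable_gaussianPDF _ _)]
  refine setLIntegral_mono ((measurable_gaussianPDF _ _).const_mul _) fun x hx => ?_
  rw [gaussianPDF, gaussianPDF, ← ENNReal.ofReal_mul (Real.exp_pos _).le]
  refine ENNReal.ofReal_le_ofReal ?_
  rw [gaussianPDFReal, gaussianPDFReal, mul_left_comm, ← Real.exp_add, neg_div, neg_div]
  gcongr
  linarith [hA x hx]

lemma gaussianReal_preimage_add_const (m c : ℝ) (v : ℝ≥0) (A : Set ℝ) :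
    gaussianReal m v ((· + c) ⁻¹' A) = gaussianReal (m + c) v A := by
  rw [← gaussianReal_map_add_const, (measurableEmbedding_addRight c).map_apply]

lemma gaussianReal_Ioi_add_le (a : ℝ) {h : ℝ} (hh : 0 ≤ h) :
    gaussianReal 0 1 (Set.Ioi (a + h)) ≤
      ENNReal.ofReal (Real.exp (-(a * h))) * gaussianReal 0 1 (Set.Ioi a) := by
  have hshift : gaussianReal 0 1 (Set.Ioi (a + h)) = gaussianReal (0 + -h) 1 (Set.Ioi a) := by
    rw [← gaussianReal_preimage_add_const, Set.preimage_add_const_Ioi, sub_neg_eq_add]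
  rw [hshift]
  refine gaussianReal_le_exp_mul_gaussianReal one_ne_zero fun x hx => ?_
  have hax : a * h ≤ x * h := mul_le_mul_of_nonneg_right (le_of_lt hx) hh
  rw [NNReal.coe_one]
  linarith [sq_nonneg h]

lemma gaussianReal_Ioi_le_two_mul_Ioc {b δ : ℝ} (hδ : 0 ≤ δ) (hbδ : 1 ≤ b * δ) :
    gaussianReal 0 1 (Set.Ioi b) ≤ 2 * gaussianReal 0 1 (Set.Ioc b (b + δ)) := by
  have hexp : ENNReal.ofReal (Real.exp (-(b * δ))) ≤ 2⁻¹ := by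
    rw [← ENNReal.ofReal_ofNat 2, ← ENNReal.ofReal_inv_of_pos two_pos]
    refine ENNReal.ofReal_le_ofReal (le_trans ?_ (one_div (2 : ℝ) ▸ Real.exp_neg_one_lt_half.le))
    gcongr
  have htail : gaussianReal 0 1 (Set.Ioi (b + δ)) ≤ gaussianReal 0 1 (Set.Ioi b) / 2 := by
    rw [ENNReal.div_eq_inv_mul]
    exact (gaussianReal_Ioi_add_le b hδ).trans (mul_le_mul_left hexp _)
  rw [mul_comm, ← ENNReal.div_le_iff_le_mul (by simp) (by simp),
    ← ENNReal.sub_half (measure_ne_top _ _), tsub_le_iff_right]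
  calc gaussianReal 0 1 (Set.Ioi b)
      = gaussianReal 0 1 (Set.Ioc b (b + δ) ∪ Set.Ioi (b + δ)) := by
        rw [Set.Ioc_union_Ioi_eq_Ioi (le_add_of_nonneg_right hδ)]
    _ ≤ gaussianReal 0 1 (Set.Ioc b (b + δ)) + gaussianReal 0 1 (Set.Ioi (b + δ)) :=
        measure_union_le _ _
    _ ≤ gaussianReal 0 1 (Set.Ioc b (b + δ)) + gaussianReal 0 1 (Set.Ioi b) / 2 := by gcongr

lemma gaussianReal_Ioc_sub_le (a δ : ℝ) {h : ℝ} (hh : 0 ≤ h) :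
    gaussianReal 0 1 (Set.Ioc (a - h) (a - h + δ)) ≤
      ENNReal.ofReal (Real.exp ((a + δ) * h)) * gaussianReal 0 1 (Set.Ioc a (a + δ)) := by
  have hshift : gaussianReal 0 1 (Set.Ioc (a - h) (a - h + δ)) =
      gaussianReal (0 + h) 1 (Set.Ioc a (a + δ)) := by
    rw [← gaussianReal_preimage_add_const, Set.preimage_add_const_Ioc, add_sub_right_comm]
  rw [hshift]
  refine gaussianReal_le_exp_mul_gaussianReal one_ne_zero fun x hx => ?_
  have hxh : x * h ≤ (a + δ) * h := mul_le_mul_of_nonneg_right hx.2 hh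
  rw [NNReal.coe_one]
  linarith [sq_nonneg h]

lemma gaussianReal_Ici_sub_div_le {a k : ℝ} (ha : 0 < a) (hk : 0 ≤ k) (hka : 2 * k ≤ a ^ 2) :
    gaussianReal 0 1 (Set.Ici (a - k / a)) ≤
      2 * ENNReal.ofReal (Real.exp (k + 1)) * gaussianReal 0 1 (Set.Ioi a) := by
  have hratio : 2 * k / a ^ 2 ≤ 1 := div_le_one_of_le₀ hka (by positivity)
  have hdouble : 1 ≤ (a - k / a) * (2 / a) := by
    have : (a - k / a) * (2 / a) = 2 - 2 * k / a ^ 2 := by field_simp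
    linarith
  have hexponent : (a + 2 / a) * (k / a) ≤ k + 1 := by
    have : (a + 2 / a) * (k / a) = k + 2 * k / a ^ 2 := by field_simp
    linarith
  have := nullSingletonClass_gaussianReal (μ := 0) (one_ne_zero (α := ℝ≥0))
  calc gaussianReal 0 1 (Set.Ici (a - k / a))
      = gaussianReal 0 1 (Set.Ioi (a - k / a)) := measure_congr Ioi_ae_eq_Ici.symm
    _ ≤ 2 * gaussianReal 0 1 (Set.Ioc (a - k / a) (a - k / a + 2 / a)) :=
        gaussianReal_Ioi_le_two_mul_Ioc (by positivity) hdouble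
    _ ≤ 2 * (ENNReal.ofReal (Real.exp ((a + 2 / a) * (k / a))) *
          gaussianReal 0 1 (Set.Ioc a (a + 2 / a))) := by
        gcongr
        exact gaussianReal_Ioc_sub_le a (2 / a) (by positivity)
    _ ≤ 2 * (ENNReal.ofReal (Real.exp (k + 1)) * gaussianReal 0 1 (Set.Ioi a)) := by
        gcongr
        exact Set.Ioc_subset_Ioi_self
    _ = 2 * ENNReal.ofReal (Real.exp (k + 1)) * gaussianReal 0 1 (Set.Ioi a) :=
        (mul_assoc _ _ _).symm

lemma tendsto_atTop_of_tendsto_gaussianReal_Ioi {ι : Type*} {l : Filter ι} {m : ℝ} {v : ℝ≥0}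
    (hv : v ≠ 0) {a : ι → ℝ}
    (h : Tendsto (fun i => gaussianReal m v (Set.Ioi (a i))) l (nhds 0)) :
    Tendsto a l atTop := by
  have := (gaussianReal_absolutelyContinuous' m hv).isOpenPosMeasure
  refine tendsto_atTop.2 fun M => ?_
  filter_upwards [h.eventually_lt_const (Measure.measure_Ioi_pos (gaussianReal m v) M)] with i hi
  by_contra! hlt
  exact hi.not_ge (measure_mono (Set.Ioi_subset_Ioi hlt.le))

lemma tendsto_measure_lt_norm_atTop {E : Type*} [NormedAddCommGroup E] [CompleteSpace E]
    [SecondCountableTopology E] [MeasurableSpace E] [BorelSpace E] (μ : Measure E)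
    [IsFiniteMeasure μ] : Tendsto (fun R : ℝ => μ {x | R < ‖x‖}) atTop (nhds 0) := by
  simpa only [Set.mem_singleton_iff, iSup_iSup_eq_left] using
    tendsto_measure_norm_gt_of_isTightMeasureSet (isTightMeasureSet_singleton (μ := μ))

lemma gaussianReal_zero_sq_eq_map (t : ℝ) :
    gaussianReal 0 (Real.toNNReal (t ^ 2)) = (gaussianReal 0 1).map (fun y => t * y) := by
  rw [gaussianReal_map_const_mul, mul_zero, mul_one, Real.toNNReal_of_nonneg (sq_nonneg t)]

lemma one_le_sqrt_one_add_sq (t : ℝ) : 1 ≤ √(1 + t ^ 2) :=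
  Real.one_le_sqrt.2 (le_add_of_nonneg_right (sq_nonneg t))

lemma map_fst_add_prod_gaussianReal (t : ℝ) :
    ((gaussianReal 0 1).prod (gaussianReal 0 (Real.toNNReal (t ^ 2)))).map
        (fun p : ℝ × ℝ => (p.1, p.1 + p.2)) =
      ((gaussianReal 0 1).prod (gaussianReal 0 1)).map
        (fun q : ℝ × ℝ => ((q.1 - t * q.2) / √(1 + t ^ 2), √(1 + t ^ 2) * q.1)) := by
  have hscale : (gaussianReal 0 1).prod (gaussianReal 0 (Real.toNNReal (t ^ 2))) =
      ((gaussianReal 0 1).prod (gaussianReal 0 1)).map (Prod.map id (fun y => t * y)) := by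
    rw [gaussianReal_zero_sq_eq_map, ← Measure.map_prod_map _ _ measurable_id (by fun_prop),
      Measure.map_id]
  have hrotation := IsGaussian.map_rotation_eq_self (μ := gaussianReal 0 1) (by simp)
    (-Real.arctan t)
  have hr : √(1 + t ^ 2) ≠ 0 := (zero_lt_one.trans_le (one_le_sqrt_one_add_sq t)).ne'
  have hr_sq : √(1 + t ^ 2) ^ 2 = 1 + t ^ 2 := Real.sq_sqrt (by positivity)
  rw [hscale, Measure.map_map (by fun_prop) (by fun_prop), ← hrotation,
    Measure.map_map (by fun_prop) (by fun_prop), hrotation]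
  congr 1
  ext q <;>
    simp only [Function.comp_apply, Prod.map_apply, id_eq, ContinuousLinearMap.rotation_apply,
      Real.cos_neg, Real.sin_neg, Real.cos_arctan, Real.sin_arctan, smul_eq_mul]
  · ring
  · field_simp
    rw [hr_sq]
    ring

/-- The probability `P(X + Y ≥ u, |X - c| > ρ)` for independent `X ∼ N(0, 1)` and `Y ∼ N(0, t²)`,
realised on `ℝ × ℝ` with the product law. -/
def sumTailDeviation (t u c ρ : ℝ) : ℝ≥0∞ :=
  ((gaussianReal 0 1).prod (gaussianReal 0 (Real.toNNReal (t ^ 2))))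
    {p : ℝ × ℝ | u ≤ p.1 + p.2 ∧ ρ < |p.1 - c|}

lemma sumTailDeviation_le_of_abs_sub_add_le {t u c₁ c₂ ρ₁ ρ₂ : ℝ} (h : |c₁ - c₂| + ρ₁ ≤ ρ₂) :
    sumTailDeviation t u c₂ ρ₂ ≤ sumTailDeviation t u c₁ ρ₁ := by
  refine measure_mono fun p hp => ⟨hp.1, ?_⟩
  linarith [hp.2, abs_sub_le p.1 c₁ c₂]

lemma sumTailDeviation_eq_rotated (t u c ρ : ℝ) :
    sumTailDeviation t u c ρ =
      ((gaussianReal 0 1).prod (gaussianReal 0 1))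
        {q : ℝ × ℝ | u ≤ √(1 + t ^ 2) * q.1 ∧ ρ < |(q.1 - t * q.2) / √(1 + t ^ 2) - c|} := by
  have hmeas : MeasurableSet {x : ℝ × ℝ | u ≤ x.2 ∧ ρ < |x.1 - c|} := by
    measurability
  have hlaw := congrArg (· {x : ℝ × ℝ | u ≤ x.2 ∧ ρ < |x.1 - c|}) (map_fst_add_prod_gaussianReal t)
  rwa [Measure.map_apply (by fun_prop) hmeas, Measure.map_apply (by fun_prop) hmeas] at hlaw

lemma sub_abs_div_le_of_le_mul {a s r z : ℝ} (ha : 0 < a) (hr : 1 ≤ r)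
    (h : a * r + s / a ≤ r * z) : a - |s| / a ≤ z := by
  refine le_of_mul_le_mul_left ?_ (zero_lt_one.trans_le hr)
  have hs : -(|s| / a) ≤ s / a := by
    rw [← neg_div]
    exact div_le_div_of_nonneg_right (neg_abs_le s) ha.le
  calc r * (a - |s| / a) = a * r - r * (|s| / a) := by ring
    _ ≤ a * r - |s| / a := by gcongr; exact le_mul_of_one_le_left (by positivity) hr
    _ ≤ r * z := by linarith

lemma abs_sub_mul_div_sub_div_le {r : ℝ} (hr : 1 ≤ r) (t a z w : ℝ) :
    |(z - t * w) / r - a / r| ≤ |z - a| + |t| * |w| := by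
  have hr_pos : 0 < r := zero_lt_one.trans_le hr
  calc |(z - t * w) / r - a / r| = |(z - a) - t * w| / r := by
        rw [← sub_div, abs_div, abs_of_pos hr_pos, sub_right_comm]
    _ ≤ |(z - a) - t * w| := div_le_self (abs_nonneg _) hr
    _ ≤ |z - a| + |t| * |w| := by rw [← abs_mul]; exact abs_sub _ _

lemma lt_or_lt_abs_of_mul_max_lt {t a C r z w : ℝ} (ht : 0 ≤ t) (hr : 1 ≤ r)
    (hz : a - C / 2 / a ≤ z) (hC : 0 ≤ C)
    (hdev : C * max (1 / a) t < |(z - t * w) / r - a / r|) :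
    a + C / 2 / a < z ∨ C / 2 < |w| := by
  by_contra! hsmall
  have hza : |z - a| ≤ C / 2 * (1 / a) := by
    rw [mul_one_div, abs_le]
    constructor <;> linarith
  refine hdev.not_ge ?_
  calc |(z - t * w) / r - a / r| ≤ |z - a| + |t| * |w| := abs_sub_mul_div_sub_div_le hr t a z w
    _ ≤ C / 2 * (1 / a) + t * (C / 2) := by rw [abs_of_nonneg ht]; gcongr; exact hsmall.2
    _ ≤ C / 2 * max (1 / a) t + max (1 / a) t * (C / 2) := by
        gcongr
        · exact le_max_left _ _
        · exact le_max_right _ _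
    _ = C * max (1 / a) t := by ring

/-- The bound on `P(X + Y ≥ a√(1 + t²) + s / a, |X - a / √(1 + t²)| > C max(1/a, t)) / P(X > a)`,
which is uniform in `a` and `t`. -/
def localisationError (s C : ℝ) : ℝ≥0∞ :=
  ENNReal.ofReal (Real.exp (-(C / 2))) +
    2 * ENNReal.ofReal (Real.exp (|s| + 1)) * gaussianReal 0 1 {w | C / 2 < ‖w‖}

lemma tendsto_localisationError (s : ℝ) : Tendsto (localisationError s) atTop (nhds 0) := by
  have hhalf : Tendsto (fun C : ℝ => C / 2) atTop atTop := tendsto_id.atTop_div_const two_pos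
  have hexp := ENNReal.tendsto_ofReal (Real.tendsto_exp_neg_atTop_nhds_zero.comp hhalf)
  have htail := ENNReal.Tendsto.const_mul (a := 2 * ENNReal.ofReal (Real.exp (|s| + 1)))
    ((tendsto_measure_lt_norm_atTop (gaussianReal 0 1)).comp hhalf)
    (Or.inr (ENNReal.mul_ne_top ENNReal.ofNat_ne_top ENNReal.ofReal_ne_top))
  rw [ENNReal.ofReal_zero] at hexp
  rw [mul_zero] at htail
  exact add_zero (0 : ℝ≥0∞) ▸ hexp.add htail

lemma sumTailDeviation_le_localisationError_mul {t a s C : ℝ} (ht : 0 ≤ t) (ha : 0 < a)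
    (hsC : 2 * |s| ≤ C) (hsa : 2 * |s| ≤ a ^ 2) :
    sumTailDeviation t (a * √(1 + t ^ 2) + s / a) (a / √(1 + t ^ 2)) (C * max (1 / a) t) ≤
      localisationError s C * gaussianReal 0 1 (Set.Ioi a) := by
  have hC : 0 ≤ C := le_trans (by positivity) hsC
  have hr := one_le_sqrt_one_add_sq t
  have hcover : {q : ℝ × ℝ | a * √(1 + t ^ 2) + s / a ≤ √(1 + t ^ 2) * q.1 ∧
      C * max (1 / a) t < |(q.1 - t * q.2) / √(1 + t ^ 2) - a / √(1 + t ^ 2)|} ⊆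
      Set.Ioi (a + C / 2 / a) ×ˢ Set.univ ∪ Set.Ici (a - |s| / a) ×ˢ {w | C / 2 < ‖w‖} := by
    rintro ⟨z, w⟩ ⟨hsum, hdev⟩
    have hz : a - |s| / a ≤ z := sub_abs_div_le_of_le_mul ha hr hsum
    have hsC' : |s| / a ≤ C / 2 / a := by gcongr; linarith
    exact (lt_or_lt_abs_of_mul_max_lt ht hr (by linarith) hC hdev).imp
      (fun h => ⟨h, trivial⟩) (fun h => ⟨hz, h⟩)
  calc sumTailDeviation t (a * √(1 + t ^ 2) + s / a) (a / √(1 + t ^ 2)) (C * max (1 / a) t)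
      ≤ gaussianReal 0 1 (Set.Ioi (a + C / 2 / a)) +
          gaussianReal 0 1 (Set.Ici (a - |s| / a)) * gaussianReal 0 1 {w | C / 2 < ‖w‖} := by
        rw [sumTailDeviation_eq_rotated]
        refine (measure_mono hcover).trans ((measure_union_le _ _).trans_eq ?_)
        rw [Measure.prod_prod, Measure.prod_prod, measure_univ, mul_one]
    _ ≤ ENNReal.ofReal (Real.exp (-(a * (C / 2 / a)))) * gaussianReal 0 1 (Set.Ioi a) +
          2 * ENNReal.ofReal (Real.exp (|s| + 1)) * gaussianReal 0 1 (Set.Ioi a) *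
            gaussianReal 0 1 {w | C / 2 < ‖w‖} := by
        gcongr
        · exact gaussianReal_Ioi_add_le a (by positivity)
        · exact gaussianReal_Ici_sub_div_le ha (abs_nonneg s) hsa
    _ = localisationError s C * gaussianReal 0 1 (Set.Ioi a) := by
        rw [mul_div_cancel₀ _ ha.ne', localisationError, add_mul]
        ring

lemma abs_div_sqrt_one_add_sq_sub_le (a t : ℝ) : |a / √(1 + t ^ 2) - a| ≤ |a| * t ^ 2 := by
  have hr := one_le_sqrt_one_add_sq t
  have hr_sq : √(1 + t ^ 2) ^ 2 = 1 + t ^ 2 := Real.sq_sqrt (by positivity)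
  have hfactor : a / √(1 + t ^ 2) - a = a * ((1 - √(1 + t ^ 2)) / √(1 + t ^ 2)) := by
    field_simp
  rw [hfactor, abs_mul, abs_div, abs_of_nonpos (sub_nonpos.2 hr),
    abs_of_pos (zero_lt_one.trans_le hr)]
  refine mul_le_mul_of_nonneg_left ?_ (abs_nonneg a)
  calc -(1 - √(1 + t ^ 2)) / √(1 + t ^ 2) ≤ -(1 - √(1 + t ^ 2)) :=
        div_le_self (by linarith) hr
    _ ≤ t ^ 2 := by nlinarith

lemma max_one_div_le_max_mul_sq {a : ℝ} (ha : 0 < a) (t : ℝ) :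
    max (1 / a) t ≤ max (a * t ^ 2) (1 / a) := by
  refine max_le (le_max_right _ _) ?_
  rcases le_total t (1 / a) with h | h
  · exact le_max_of_le_right h
  · have ht : 0 ≤ t := le_trans (by positivity) h
    have hat : 1 ≤ a * t := (div_le_iff₀' ha).1 h
    refine le_max_of_le_left ?_
    calc t ≤ a * t * t := le_mul_of_one_le_left ht hat
      _ = a * t ^ 2 := by ring

lemma abs_div_sqrt_sub_add_mul_max_le {a C : ℝ} (ha : 0 < a) (hC : 0 ≤ C) (t : ℝ) :
    |a / √(1 + t ^ 2) - a| + C * max (1 / a) t ≤ (C + 1) * max (a * t ^ 2) (1 / a) := by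
  have hcentre : |a / √(1 + t ^ 2) - a| ≤ max (a * t ^ 2) (1 / a) :=
    ((abs_div_sqrt_one_add_sq_sub_le a t).trans_eq (by rw [abs_of_pos ha])).trans (le_max_left _ _)
  have hradius := mul_le_mul_of_nonneg_left (max_one_div_le_max_mul_sq ha t) hC
  linarith

section Localisation

variable {ι : Type*} {l : Filter ι} {τ a : ι → ℝ} {w : ι → ℝ≥0∞}

lemma eventually_mul_sumTailDeviation_le (hτ : ∀ i, 0 ≤ τ i) (ha : Tendsto a l atTop)
    (hw : ∀ᶠ i in l, w i * gaussianReal 0 1 (Set.Ioi (a i)) ≤ 1) {s C : ℝ} (hsC : 2 * |s| ≤ C) :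
    ∀ᶠ i in l, w i * sumTailDeviation (τ i) (a i * √(1 + τ i ^ 2) + s / a i)
      (a i / √(1 + τ i ^ 2)) (C * max (1 / a i) (τ i)) ≤ localisationError s C := by
  filter_upwards [hw, ha.eventually_gt_atTop 0,
    ((tendsto_pow_atTop two_ne_zero).comp ha).eventually_ge_atTop (2 * |s|)] with i hwi hai hsai
  calc w i * sumTailDeviation (τ i) (a i * √(1 + τ i ^ 2) + s / a i)
        (a i / √(1 + τ i ^ 2)) (C * max (1 / a i) (τ i))
      ≤ w i * (localisationError s C * gaussianReal 0 1 (Set.Ioi (a i))) := by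
        gcongr
        exact sumTailDeviation_le_localisationError_mul (hτ i) hai hsC hsai
    _ = localisationError s C * (w i * gaussianReal 0 1 (Set.Ioi (a i))) := mul_left_comm _ _ _
    _ ≤ localisationError s C := mul_le_of_le_one_right' hwi

lemma limsup_limsup_mul_sumTailDeviation_eq_zero (hτ : ∀ i, 0 ≤ τ i) (ha : Tendsto a l atTop)
    (hw : ∀ᶠ i in l, w i * gaussianReal 0 1 (Set.Ioi (a i)) ≤ 1) (s : ℝ) :
    limsup (fun C : ℝ => limsup (fun i =>
      w i * sumTailDeviation (τ i) (a i * √(1 + τ i ^ 2) + s / a i)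
        (a i / √(1 + τ i ^ 2)) (C * max (1 / a i) (τ i))) l) atTop = 0 := by
  rw [← nonpos_iff_eq_zero, ← (tendsto_localisationError s).limsup_eq]
  refine limsup_le_limsup ?_
  filter_upwards [eventually_ge_atTop (2 * |s|)] with C hC
  exact limsup_le_of_le (h := eventually_mul_sumTailDeviation_le hτ ha hw hC)

lemma tendsto_mul_sumTailDeviation_zero (hτ : ∀ i, 0 ≤ τ i) (ha : Tendsto a l atTop)
    (hw : ∀ᶠ i in l, w i * gaussianReal 0 1 (Set.Ioi (a i)) ≤ 1) (s : ℝ) {θ : ι → ℝ}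
    (hθ : ∀ i, 0 < θ i)
    (hlim : Tendsto (fun i => max (a i * τ i ^ 2) (1 / a i) / θ i) l (nhds 0)) :
    Tendsto (fun i => w i * sumTailDeviation (τ i) (a i * √(1 + τ i ^ 2) + s / a i) (a i) (θ i))
      l (nhds 0) := by
  refine ENNReal.tendsto_nhds_zero.2 fun ε hε => ?_
  obtain ⟨C, hCε, hsC⟩ := (((tendsto_localisationError s).eventually_le_const hε).and
    (eventually_ge_atTop (2 * |s|))).exists
  have hC : 0 ≤ C := le_trans (by positivity) hsC
  have hsmall := hlim.eventually_lt_const (show 0 < (C + 1)⁻¹ by positivity)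
  filter_upwards [eventually_mul_sumTailDeviation_le hτ ha hw hsC, hsmall,
    ha.eventually_gt_atTop 0] with i hle hθi hai
  have hwindow : (C + 1) * max (a i * τ i ^ 2) (1 / a i) ≤ θ i := by
    rw [div_lt_iff₀ (hθ i), lt_inv_mul_iff₀ (by positivity)] at hθi
    exact hθi.le
  refine le_trans ?_ (hle.trans hCε)
  gcongr
  exact sumTailDeviation_le_of_abs_sub_add_le
    ((abs_div_sqrt_sub_add_mul_max_le hai hC (τ i)).trans hwindow)

theorem gaussian_sum_tail_localisation_general (hτ : ∀ i, 0 ≤ τ i) (ha : Tendsto a l atTop)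
    (hw : ∀ᶠ i in l, w i * gaussianReal 0 1 (Set.Ioi (a i)) ≤ 1) (s : ℝ) :
    (limsup (fun C : ℝ => limsup (fun i =>
      w i * ((gaussianReal 0 1).prod (gaussianReal 0 (Real.toNNReal (τ i ^ 2))))
        {p : ℝ × ℝ | a i * √(1 + τ i ^ 2) + s / a i ≤ p.1 + p.2 ∧
          C * max (1 / a i) (τ i) < |p.1 - a i / √(1 + τ i ^ 2)|}) l) atTop = 0) ∧
    ∀ θ : ι → ℝ, (∀ i, 0 < θ i) →
      Tendsto (fun i => max (a i * τ i ^ 2) (1 / a i) / θ i) l (nhds 0) →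
      Tendsto (fun i =>
        w i * ((gaussianReal 0 1).prod (gaussianReal 0 (Real.toNNReal (τ i ^ 2))))
          {p : ℝ × ℝ | a i * √(1 + τ i ^ 2) + s / a i ≤ p.1 + p.2 ∧ θ i < |p.1 - a i|})
        l (nhds 0) :=
  ⟨limsup_limsup_mul_sumTailDeviation_eq_zero hτ ha hw s,
    fun _ hθ hlim => tendsto_mul_sumTailDeviation_zero hτ ha hw s hθ hlim⟩

end Localisation

lemma tendsto_atTop_of_gaussianReal_Ioi_eq {d : ℕ} (hd : d ≠ 0) {a : ℕ → ℝ}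
    (ha : ∀ L : ℕ, 2 ≤ L →
      gaussianReal 0 1 (Set.Ioi (a L)) = ENNReal.ofReal (1 / (L : ℝ) ^ d)) :
    Tendsto a atTop atTop := by
  refine tendsto_atTop_of_tendsto_gaussianReal_Ioi (m := 0) one_ne_zero ?_
  have hpow : Tendsto (fun L : ℕ => 1 / (L : ℝ) ^ d) atTop (nhds 0) :=
    ((tendsto_pow_atTop hd).comp tendsto_natCast_atTop_atTop).const_div_atTop 1
  rw [← ENNReal.ofReal_zero]
  refine (ENNReal.tendsto_ofReal hpow).congr' ?_
  filter_upwards [eventually_ge_atTop 2] with L hL using (ha L hL).symm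

lemma natCast_pow_mul_ofReal_one_div_pow_le_one (L d : ℕ) :
    (L : ℝ≥0∞) ^ d * ENNReal.ofReal (1 / (L : ℝ) ^ d) ≤ 1 := by
  rw [← ENNReal.ofReal_natCast, ← ENNReal.ofReal_pow L.cast_nonneg,
    ← ENNReal.ofReal_mul (by positivity), mul_one_div, ENNReal.ofReal_le_one]
  exact div_self_le_one _

lemma eventually_natCast_pow_mul_gaussianReal_Ioi_le_one {d : ℕ} {a : ℕ → ℝ}
    (ha : ∀ L : ℕ, 2 ≤ L →
      gaussianReal 0 1 (Set.Ioi (a L)) = ENNReal.ofReal (1 / (L : ℝ) ^ d)) :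
    ∀ᶠ L : ℕ in atTop, (L : ℝ≥0∞) ^ d * gaussianReal 0 1 (Set.Ioi (a L)) ≤ 1 := by
  filter_upwards [eventually_ge_atTop 2] with L hL
  rw [ha L hL]
  exact natCast_pow_mul_ofReal_one_div_pow_le_one L d

/-- Lemma 2.3, second part.
With `X, Y_L` independent centred Gaussians of variance `1` and `τ_L²`, `τ_L → 0`, and
`a_L` defined by `P(X > a_L) = L^{−d}`: (i) for every `s`,
`limsup_{C→∞} limsup_{L→∞} L^d · P(X + Y_L ≥ a_L√(1+τ_L²) + s/a_L ; X ∉ I_L(C)) = 0`;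
(ii) consequently, for every sequence `θ_L > 0` with `max(a_L τ_L², 1/a_L) ≪ θ_L`,
`L^d · P(X + Y_L ≥ a_L√(1+τ_L²) + s/a_L ; |X − a_L| > θ_L) → 0`. -/
theorem gaussian_sum_tail_localisation
    (d : ℕ) (hd : 1 ≤ d)
    (τ : ℕ → ℝ) (hτ_nonneg : ∀ L, 0 ≤ τ L)
    (hτ : Tendsto τ atTop (nhds 0))
    (a : ℕ → ℝ) (ha_pos : ∀ L : ℕ, 2 ≤ L → 0 < a L)
    (ha_def : ∀ L : ℕ, 2 ≤ L →
      gaussianReal 0 1 (Set.Ioi (a L)) = ENNReal.ofReal (1 / (L : ℝ) ^ d))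
    (s : ℝ) :
    (limsup
      (fun C : ℝ => limsup
        (fun L : ℕ =>
          (L : ℝ≥0∞) ^ d *
            ((gaussianReal 0 1).prod (gaussianReal 0 (Real.toNNReal (τ L ^ 2))))
              {p : ℝ × ℝ | a L * Real.sqrt (1 + τ L ^ 2) + s / a L ≤ p.1 + p.2 ∧
                p.1 ∉ gaussiantailInterval τ a C L})
        atTop)
      atTop = 0) ∧
    ∀ θ : ℕ → ℝ, (∀ L, 0 < θ L) →
      Tendsto (fun L => max (a L * τ L ^ 2) (1 / a L) / θ L) atTop (nhds 0) →
      Tendsto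
        (fun L : ℕ =>
          (L : ℝ≥0∞) ^ d *
            ((gaussianReal 0 1).prod (gaussianReal 0 (Real.toNNReal (τ L ^ 2))))
              {p : ℝ × ℝ | a L * Real.sqrt (1 + τ L ^ 2) + s / a L ≤ p.1 + p.2 ∧
                θ L < |p.1 - a L|})
        atTop (nhds 0) := by
  simpa only [notMem_gaussiantailInterval_iff] using gaussian_sum_tail_localisation_general
    hτ_nonneg (tendsto_atTop_of_gaussianReal_Ioi_eq (Nat.one_le_iff_ne_zero.1 hd) ha_def)
    (eventually_natCast_pow_mul_gaussianReal_Ioi_le_one ha_def) s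

end
end
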